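/- Hard-edge norm asymptotics for weighted monomials (instance of Lemma 3.5 and Corollary 3.7 for the Ginibre potential): for every ε > 0 there exists N such that for all integers n ≥ N and all integers j with n − √n · log n ≤ j ≤ n − 1, one has | c_{j,n} / ( √(2π/n) · (j/n)^{j + 1/2} · e^{−j} · φ((j − n)/√j) ) − 1 | ≤ ε. -/

import Mathlib

/-!
With `u = |w|²` the norm becomes `c_{j,n} = ∫_0^1 u^j e^{-nu} du`, a Laplace integral whose maximum
`u = j/n` lies at distance `(n - j)/n` from the hard edge `u = 1`. After the affine substitution
`u = j/n * (1 + s/√j)` it equals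
`(j/n)^j e^{-j} (√j/n) ∫_{s ≤ T} h_j(s) ds` with `T = (n - j)/√j`,
where `h_j(s) = exp (j log (1 + s/√j) - √j s)` (`cJN_eq_laplace`), while the claimed asymptotic
expression is the same with `h_j(s)` replaced by `e^{-s²/2}`. So the quotient in the theorem is
`A / B` with `A = ∫_{s ≤ T} h_j` and `B = ∫_{s ≤ T} e^{-s²/2}`.

By Taylor expansion `h_j → e^{-s²/2}` pointwise, and `h_j(s) ≤ e^{1 - |s|/2}` for all `j ≥ 1`
(`laplaceDensity_le`), hence `h_j → e^{-s²/2}` in `L¹(ℝ)`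
(`tendsto_integral_abs_laplaceDensity_sub`). This bounds `|A - B|` uniformly in `T`. Because `j ≤ n`
gives `T ≥ 0`, the denominator satisfies `B ≥ √(2π)/2 ≥ 1`, and `j ≥ n - √n log n` is only needed to
force `j → ∞` uniformly.
-/

open MeasureTheory Real Filter

/-- The Lebesgue area measure on `ℂ` divided by `π`, so the unit disk has measure 1. -/
noncomputable def dA : Measure ℂ := (ENNReal.ofReal Real.pi)⁻¹ • (volume : Measure ℂ)

/-- `c_{j,n} = ∫_{|w| ≤ 1} |w|^{2j} e^{-n|w|²} dA(w)`. -/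
noncomputable def cJN (j n : ℕ) : ℝ :=
  ∫ w in {w : ℂ | ‖w‖ ≤ 1}, ‖w‖ ^ (2 * j) * Real.exp (-(n : ℝ) * ‖w‖ ^ 2) ∂dA

/-- The free boundary function `φ(t) = (1/√(2π)) ∫_t^∞ e^{-s²/2} ds`. -/
noncomputable def freeBoundary (t : ℝ) : ℝ :=
  (Real.sqrt (2 * Real.pi))⁻¹ * ∫ s in Set.Ioi t, Real.exp (-s ^ 2 / 2)

/-! ### The rescaled Laplace integrand and its Gaussian limit -/

/-- The rescaled Laplace integrand: `u ^ j * exp (-n u)`, divided by its maximal value at `u = j/n`,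
in the variable `s` with `u = j/n * (1 + s/√j)`; it is extended by zero to `s ≤ -√j`. -/
noncomputable def laplaceDensity (j : ℕ) (s : ℝ) : ℝ :=
  (Set.Ioi (-√(j : ℝ))).indicator
    (fun s => Real.exp ((j : ℝ) * Real.log (1 + s / √(j : ℝ)) - √(j : ℝ) * s)) s

lemma laplaceDensity_nonneg (j : ℕ) (s : ℝ) : 0 ≤ laplaceDensity j s :=
  Set.indicator_nonneg (fun _ _ => (Real.exp_pos _).le) _

lemma measurable_laplaceDensity (j : ℕ) : Measurable (laplaceDensity j) := by
  unfold laplaceDensity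
  exact Measurable.indicator (by fun_prop) measurableSet_Ioi

/-- A bound uniform in `j`, obtained from `log (1 + x) = 2 log √(1 + x) ≤ 2 (√(1 + x) - 1)`. -/
lemma laplaceDensity_le {j : ℕ} (hj : 1 ≤ j) (s : ℝ) :
    laplaceDensity j s ≤ Real.exp (1 - |s| / 2) := by
  unfold laplaceDensity
  by_cases hs : s ∈ Set.Ioi (-√(j : ℝ))
  · rw [Set.indicator_of_mem hs]
    have hj1 : (1 : ℝ) ≤ j := by exact_mod_cast hj
    have hr1 : 1 ≤ √(j : ℝ) := Real.one_le_sqrt.mpr hj1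
    have hjr : (j : ℝ) = √(j : ℝ) ^ 2 := (Real.sq_sqrt (by positivity)).symm
    have hs' : -√(j : ℝ) < s := hs
    rw [Real.exp_le_exp]
    generalize √(j : ℝ) = r at *
    have hr0 : 0 < r := by linarith
    obtain ⟨x, rfl⟩ : ∃ x, s = r * x := ⟨s / r, by field_simp⟩
    have hx : 0 < 1 + x := by nlinarith
    rw [mul_div_cancel_left₀ _ hr0.ne', hjr]
    obtain ⟨y, hy, hxy⟩ : ∃ y, 0 < y ∧ 1 + x = y ^ 2 :=
      ⟨√(1 + x), Real.sqrt_pos.mpr hx, (Real.sq_sqrt hx.le).symm⟩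
    have hlog : Real.log (1 + x) ≤ 2 * (y - 1) := by
      rw [hxy, Real.log_pow]
      have := Real.log_le_sub_one_of_pos hy
      push_cast
      linarith
    have hx' : x = (y - 1) * (y + 1) := by linarith
    have h1 : r ^ 2 * Real.log (1 + x) - r * (r * x) ≤ -(r * |y - 1|) ^ 2 := by
      have := mul_le_mul_of_nonneg_left hlog (sq_nonneg r)
      rw [mul_pow, sq_abs]
      nlinarith
    have h2 : |r * x| ≤ (r * |y - 1|) * (2 + r * |y - 1|) := by
      rw [hx', abs_mul, abs_mul, abs_of_pos hr0, ← mul_assoc, abs_of_pos (by linarith : 0 < y + 1)]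
      refine mul_le_mul_of_nonneg_left ?_ (by positivity)
      have hy1 := le_abs_self (y - 1)
      have hy2 := mul_le_mul_of_nonneg_right hr1 (abs_nonneg (y - 1))
      linarith
    nlinarith [sq_nonneg (r * |y - 1| - 1)]
  · rw [Set.indicator_of_notMem hs]
    positivity

lemma integrable_exp_one_sub_abs : Integrable (fun s : ℝ => Real.exp (1 - |s| / 2)) := by
  rw [← integrableOn_univ, ← Set.Iic_union_Ioi (a := (0 : ℝ)), integrableOn_union]
  constructor
  · have h := (integrableOn_exp_mul_Iic (a := 1 / 2) (by norm_num) 0).const_mul (Real.exp 1)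
    refine IntegrableOn.congr_fun h (fun s hs => ?_) measurableSet_Iic
    simp only [← Real.exp_add, abs_of_nonpos (Set.mem_Iic.mp hs)]
    ring_nf
  · have h := (integrableOn_exp_mul_Ioi (a := -1 / 2) (by norm_num) 0).const_mul (Real.exp 1)
    refine IntegrableOn.congr_fun h (fun s hs => ?_) measurableSet_Ioi
    simp only [← Real.exp_add, abs_of_pos (Set.mem_Ioi.mp hs)]
    ring_nf

lemma integrable_laplaceDensity {j : ℕ} (hj : 1 ≤ j) : Integrable (laplaceDensity j) :=
  integrable_exp_one_sub_abs.mono' (measurable_laplaceDensity j).aestronglyMeasurable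
    (.of_forall fun s => by
      rw [Real.norm_of_nonneg (laplaceDensity_nonneg j s)]
      exact laplaceDensity_le hj s)

lemma integrable_gaussian_half : Integrable (fun s : ℝ => Real.exp (-s ^ 2 / 2)) := by
  convert integrable_exp_neg_mul_sq (b := 1 / 2) (by norm_num) using 3
  ring

lemma tendsto_laplaceDensity (s : ℝ) :
    Tendsto (fun j : ℕ => laplaceDensity j s) atTop (nhds (Real.exp (-s ^ 2 / 2))) := by
  have hsqrt : Tendsto (fun j : ℕ => √(j : ℝ)) atTop atTop :=
    Real.tendsto_sqrt_atTop.comp tendsto_natCast_atTop_atTop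
  have key : Tendsto (fun j : ℕ => (j : ℝ) * Real.log (1 + s / √(j : ℝ)) - √(j : ℝ) * s) atTop
      (nhds (-s ^ 2 / 2)) := by
    rw [tendsto_iff_norm_sub_tendsto_zero]
    have hlim : Tendsto (fun j : ℕ => 2 * |s| ^ 3 / √(j : ℝ)) atTop (nhds 0) :=
      hsqrt.const_div_atTop _
    refine squeeze_zero' (.of_forall fun _ => norm_nonneg _) ?_ hlim
    filter_upwards [hsqrt.eventually_gt_atTop (2 * |s|), hsqrt.eventually_gt_atTop 0] with j h1 h0
    have hjr : (j : ℝ) = √(j : ℝ) ^ 2 := (Real.sq_sqrt (by positivity)).symm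
    generalize √(j : ℝ) = r at *
    rw [hjr]
    have hx : |-(s / r)| < 1 / 2 := by
      rw [abs_neg, abs_div, abs_of_pos h0, div_lt_iff₀ h0]
      linarith
    have hT := Real.abs_log_sub_add_sum_range_le (x := -(s / r)) (by linarith) 2
    have hT2 : |-(s / r)| ^ (2 + 1) / (1 - |-(s / r)|) ≤ 2 * (|s| / r) ^ 3 := by
      rw [div_le_iff₀ (by linarith)]
      rw [abs_neg, abs_div, abs_of_pos h0] at hx ⊢
      have : 0 ≤ (|s| / r) ^ 3 := by positivity
      nlinarith
    have hT3 := hT.trans hT2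
    rw [Real.norm_eq_abs]
    have e1 : r ^ 2 * Real.log (1 + s / r) - r * s - -s ^ 2 / 2 =
        r ^ 2 * ((∑ i ∈ Finset.range 2, (-(s / r)) ^ (i + 1) / ((i : ℝ) + 1)) +
          Real.log (1 - -(s / r))) := by
      simp only [Finset.sum_range_succ, Finset.sum_range_zero, sub_neg_eq_add]
      push_cast
      field_simp
      ring
    rw [e1, abs_mul, abs_of_pos (by positivity : 0 < r ^ 2)]
    calc _ ≤ r ^ 2 * (2 * (|s| / r) ^ 3) := by gcongr
      _ = _ := by field_simp
  refine ((Real.continuous_exp.tendsto _).comp key).congr' ?_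
  filter_upwards [hsqrt.eventually_gt_atTop (-s)] with j h1
  have : s ∈ Set.Ioi (-√(j : ℝ)) := by
    rw [Set.mem_Ioi]
    linarith
  simp [laplaceDensity, Set.indicator_of_mem this]

/-- `L¹` convergence to the Gaussian; this makes the convergence of the integrals over
`(-∞, T]` uniform in `T`. -/
lemma tendsto_integral_abs_laplaceDensity_sub :
    Tendsto (fun j : ℕ => ∫ s, |laplaceDensity j s - Real.exp (-s ^ 2 / 2)|) atTop (nhds 0) := by
  -- The shift by one discards `j = 0`, for which the dominating bound is not available.
  rw [← tendsto_add_atTop_iff_nat 1]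
  have h := tendsto_integral_of_dominated_convergence (μ := volume)
    (F := fun (j : ℕ) s => |laplaceDensity (j + 1) s - Real.exp (-s ^ 2 / 2)|) (f := fun _ => 0)
    (fun s => Real.exp (1 - |s| / 2) + Real.exp (-s ^ 2 / 2))
    (fun j => ((measurable_laplaceDensity (j + 1)).sub
      (by fun_prop : Measurable fun s : ℝ => Real.exp (-s ^ 2 / 2))).norm.aestronglyMeasurable)
    (integrable_exp_one_sub_abs.add integrable_gaussian_half)
    (fun j => .of_forall fun s => ?_) (.of_forall fun s => ?_)
  · simpa using h
  · rw [Real.norm_eq_abs, abs_abs, abs_le]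
    have h1 := laplaceDensity_nonneg (j + 1) s
    have h2 := laplaceDensity_le (j := j + 1) (by omega) s
    have h3 := Real.exp_pos (-s ^ 2 / 2)
    have h4 := Real.exp_pos (1 - |s| / 2)
    constructor <;> linarith
  · have := (((tendsto_laplaceDensity s).comp (tendsto_add_atTop_nat 1)).sub_const
      (Real.exp (-s ^ 2 / 2))).abs
    simpa using this

/-! ### Reduction of the norm to a Laplace integral -/

/-- Polar coordinates followed by `u = |w|²`. -/
lemma cJN_eq_integral (j n : ℕ) :
    cJN j n = ∫ u in Set.Ioi (0 : ℝ),
      (Set.Iic (1 : ℝ)).indicator (fun u => u ^ j * Real.exp (-(n : ℝ) * u)) u := by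
  set g : ℝ → ℝ := (Set.Iic (1 : ℝ)).indicator (fun u => u ^ j * Real.exp (-(n : ℝ) * u)) with hg
  have hind : ∀ w : ℂ, {w : ℂ | ‖w‖ ≤ 1}.indicator
      (fun w : ℂ => ‖w‖ ^ (2 * j) * Real.exp (-(n : ℝ) * ‖w‖ ^ 2)) w = g (‖w‖ ^ 2) := by
    intro w
    have : ‖w‖ ^ 2 ≤ 1 ↔ ‖w‖ ≤ 1 := by
      rw [sq_le_one_iff₀ (norm_nonneg w)]
    simp only [hg, Set.indicator_apply, Set.mem_ofPred_eq, Set.mem_Iic, this, pow_mul]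
  have hmeas : MeasurableSet {w : ℂ | ‖w‖ ≤ 1} := measurableSet_le measurable_norm measurable_const
  have hpolar := integral_fun_norm_addHaar (volume : Measure ℂ) (fun r : ℝ => g (r ^ 2))
  have hball : (volume : Measure ℂ).real (Metric.ball 0 1) = Real.pi := by
    simp [Measure.real, Complex.volume_ball]
  have hsub := integral_comp_rpow_Ioi_of_pos (g := g) (p := 2) (by norm_num)
  rw [cJN, ← integral_indicator hmeas, dA, integral_smul_measure, funext hind, hpolar, hball,
    ← hsub, Complex.finrank_real_complex, ENNReal.toReal_inv, ENNReal.toReal_ofReal Real.pi_pos.le]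
  have hint : ∫ x in Set.Ioi (0 : ℝ), (2 * x ^ ((2 : ℝ) - 1)) • g (x ^ (2 : ℝ)) =
      2 * ∫ y in Set.Ioi (0 : ℝ), y ^ (2 - 1) • g (y ^ 2) := by
    rw [← integral_const_mul]
    refine setIntegral_congr_fun measurableSet_Ioi fun x _ => ?_
    norm_num
    ring
  rw [hint]
  simp only [nsmul_eq_mul, smul_eq_mul]
  field_simp
  norm_num [mul_comm]

/-- The affine substitution `u = √j / n * (s + √j)`, which moves the maximum `u = j/n` of the
integrand to `s = 0` and rescales its width to one. -/
lemma cJN_eq_laplace {j n : ℕ} (hj : 1 ≤ j) (hn : 1 ≤ n) :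
    cJN j n = ((j : ℝ) / n) ^ j * Real.exp (-(j : ℝ)) * (√(j : ℝ) / n) *
      ∫ s in Set.Iic (((n : ℝ) - j) / √(j : ℝ)), laplaceDensity j s := by
  have hn0 : (0 : ℝ) < n := by exact_mod_cast hn
  have hj0 : (0 : ℝ) < j := by exact_mod_cast hj
  have hr0 : 0 < √(j : ℝ) := Real.sqrt_pos.mpr hj0
  have hjr : (j : ℝ) = √(j : ℝ) ^ 2 := (Real.sq_sqrt hj0.le).symm
  set G : ℝ → ℝ := (Set.Ioi (0 : ℝ)).indicator ((Set.Iic (1 : ℝ)).indicator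
    (fun u => u ^ j * Real.exp (-(n : ℝ) * u))) with hG
  have ha : 0 < √(j : ℝ) / n := by positivity
  have h1 : ∫ s, G (√(j : ℝ) / n * (s + √(j : ℝ))) = (√(j : ℝ) / n)⁻¹ * ∫ u, G u := by
    rw [integral_add_right_eq_self (fun s => G (√(j : ℝ) / n * s)), Measure.integral_comp_mul_left,
      abs_of_pos (inv_pos.mpr ha), smul_eq_mul]
  have h2 : ∀ s, G (√(j : ℝ) / n * (s + √(j : ℝ))) = ((j : ℝ) / n) ^ j * Real.exp (-(j : ℝ)) *
      (Set.Iic (((n : ℝ) - j) / √(j : ℝ))).indicator (laplaceDensity j) s := by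
    intro s
    have c1 : 0 < √(j : ℝ) / n * (s + √(j : ℝ)) ↔ -√(j : ℝ) < s := by
      rw [mul_pos_iff_of_pos_left ha]
      constructor <;> intro h <;> linarith
    have c2 : √(j : ℝ) / n * (s + √(j : ℝ)) ≤ 1 ↔ s ≤ ((n : ℝ) - j) / √(j : ℝ) := by
      rw [div_mul_eq_mul_div, div_le_one hn0, le_div_iff₀ hr0]
      constructor <;> intro h <;> nlinarith
    simp only [hG, laplaceDensity, Set.indicator_apply, Set.mem_Ioi, Set.mem_Iic, c1, c2]
    by_cases hs : -√(j : ℝ) < s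
    · by_cases hs2 : s ≤ ((n : ℝ) - j) / √(j : ℝ)
      · simp only [hs, hs2, if_true]
        have hpos : 0 < 1 + s / √(j : ℝ) := by
          rw [← div_self hr0.ne', ← add_div]
          exact div_pos (by linarith) hr0
        have e1 : √(j : ℝ) / n * (s + √(j : ℝ)) = (j : ℝ) / n * (1 + s / √(j : ℝ)) := by
          nth_rewrite 3 [hjr]
          field_simp
          ring
        have e2 : -(n : ℝ) * (√(j : ℝ) / n * (s + √(j : ℝ))) = -(j : ℝ) + -(√(j : ℝ) * s) := by
          nth_rewrite 3 [hjr]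
          field_simp
          ring
        rw [e2, e1, mul_pow, Real.exp_add, sub_eq_add_neg, Real.exp_add, Real.exp_nat_mul,
          Real.exp_log hpos]
        ring
      · simp [hs2]
    · simp [hs]
  rw [cJN_eq_integral, ← integral_indicator measurableSet_Ioi]
  change ∫ u, G u = _
  have h3 : ∫ u, G u = (√(j : ℝ) / n) * ∫ s, G (√(j : ℝ) / n * (s + √(j : ℝ))) := by
    rw [h1, mul_inv_cancel_left₀ ha.ne']
  rw [h3, funext h2, integral_const_mul, integral_indicator measurableSet_Iic]
  ring

/-! ### The Gaussian denominator and the conclusion -/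

lemma freeBoundary_neg (t : ℝ) :
    freeBoundary (-t) = (√(2 * Real.pi))⁻¹ * ∫ s in Set.Iic t, Real.exp (-s ^ 2 / 2) := by
  rw [freeBoundary, ← integral_comp_neg_Iic]
  simp

lemma one_le_integral_gaussian {t : ℝ} (ht : 0 ≤ t) :
    1 ≤ ∫ s in Set.Iic t, Real.exp (-s ^ 2 / 2) := by
  have h1 : ∫ s in Set.Iic (0 : ℝ), Real.exp (-s ^ 2 / 2) = √(2 * Real.pi) / 2 := by
    have h := integral_comp_neg_Iic (0 : ℝ) (fun s => Real.exp (-(1 / 2) * s ^ 2))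
    rw [neg_zero, integral_gaussian_Ioi] at h
    rw [show 2 * Real.pi = Real.pi / (1 / 2) by ring, ← h]
    congr 1
    ext s
    ring_nf
  have h2 : ∫ s in Set.Iic (0 : ℝ), Real.exp (-s ^ 2 / 2) ≤
      ∫ s in Set.Iic t, Real.exp (-s ^ 2 / 2) :=
    setIntegral_mono_set integrable_gaussian_half.integrableOn
      (.of_forall fun s => (Real.exp_pos _).le) (Set.Iic_subset_Iic.mpr ht).eventuallyLE
  have h3 : 2 ≤ √(2 * Real.pi) := by
    apply Real.le_sqrt_of_sq_le
    linarith [Real.pi_gt_three]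
  linarith

lemma eventually_half_le :
    ∀ᶠ n : ℕ in atTop, (n : ℝ) / 2 ≤ (n : ℝ) - √(n : ℝ) * Real.log n := by
  have h := (isLittleO_log_rpow_atTop (r := 1 / 2) (by norm_num)).bound
    (by norm_num : (0 : ℝ) < 1 / 2)
  filter_upwards [tendsto_natCast_atTop_atTop.eventually h] with n hn
  rw [← Real.sqrt_eq_rpow, Real.norm_of_nonneg (Real.sqrt_nonneg _)] at hn
  have h1 := (le_abs_self _).trans hn
  have h2 := mul_le_mul_of_nonneg_left h1 (Real.sqrt_nonneg (n : ℝ))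
  have h3 : √(n : ℝ) * √(n : ℝ) = n := Real.mul_self_sqrt (by positivity)
  linarith

/-- Hard-edge norm asymptotics for weighted monomials: uniformly for
`n − √n log n ≤ j ≤ n − 1`,
`c_{j,n} ∼ √(2π/n) (j/n)^{j+1/2} e^{−j} φ((j−n)/√j)` as `n → ∞`. -/
theorem hard_edge_norm_asymptotics :
    ∀ ε > (0 : ℝ), ∃ N : ℕ, ∀ n : ℕ, N ≤ n → ∀ j : ℕ,
      (n : ℝ) - Real.sqrt n * Real.log n ≤ (j : ℝ) → (j : ℝ) ≤ (n : ℝ) - 1 →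
      |cJN j n /
          (Real.sqrt (2 * Real.pi / n) * ((j : ℝ) / n) ^ ((j : ℝ) + 1 / 2) *
            Real.exp (-(j : ℝ)) * freeBoundary (((j : ℝ) - n) / Real.sqrt j)) - 1| ≤ ε := by
  intro ε hε
  obtain ⟨J, hJ⟩ := eventually_atTop.mp
    (tendsto_integral_abs_laplaceDensity_sub.eventually (gt_mem_nhds hε))
  obtain ⟨M, hM⟩ := eventually_atTop.mp eventually_half_le
  refine ⟨max M (2 * J + 2), fun n hn j hj1 hj2 => ?_⟩
  have hn1 : 2 * J + 2 ≤ n := (le_max_right _ _).trans hn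
  have hjn : (n : ℝ) / 2 ≤ j := (hM n ((le_max_left _ _).trans hn)).trans hj1
  have hJ1 : J + 1 ≤ j := by
    have : ((2 * J + 2 : ℕ) : ℝ) ≤ n := by exact_mod_cast hn1
    push_cast at this
    have : (J : ℝ) + 1 ≤ j := by linarith
    exact_mod_cast this
  have hj : 1 ≤ j := by omega
  have hn0 : (0 : ℝ) < n := by
    have : 0 < n := by omega
    exact_mod_cast this
  have hj0 : (0 : ℝ) < j := by exact_mod_cast hj
  have hT : 0 ≤ ((n : ℝ) - j) / √(j : ℝ) := div_nonneg (by linarith) (Real.sqrt_nonneg _)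
  have hneg : ((j : ℝ) - n) / √(j : ℝ) = -(((n : ℝ) - j) / √(j : ℝ)) := by ring
  have hB := one_le_integral_gaussian hT
  have hAB : |(∫ s in Set.Iic (((n : ℝ) - j) / √(j : ℝ)), laplaceDensity j s) -
      ∫ s in Set.Iic (((n : ℝ) - j) / √(j : ℝ)), Real.exp (-s ^ 2 / 2)| ≤ ε := by
    have hi := integrable_laplaceDensity hj
    rw [← integral_sub hi.integrableOn integrable_gaussian_half.integrableOn]
    refine (abs_integral_le_integral_abs).trans ?_
    refine (setIntegral_le_integral (hi.sub integrable_gaussian_half).abs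
      (.of_forall fun s => abs_nonneg _)).trans (hJ j (by omega)).le
  rw [hneg, freeBoundary_neg, cJN_eq_laplace hj (by omega)]
  generalize (∫ s in Set.Iic (((n : ℝ) - j) / √(j : ℝ)), laplaceDensity j s) = A at *
  generalize (∫ s in Set.Iic (((n : ℝ) - j) / √(j : ℝ)), Real.exp (-s ^ 2 / 2)) = B at *
  have hB0 : 0 < B := by linarith
  have hratio : ((j : ℝ) / n) ^ j * Real.exp (-(j : ℝ)) * (√(j : ℝ) / n) * A /
      (√(2 * Real.pi / n) * ((j : ℝ) / n) ^ ((j : ℝ) + 1 / 2) * Real.exp (-(j : ℝ)) *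
        ((√(2 * Real.pi))⁻¹ * B)) = A / B := by
    have hp : (0 : ℝ) < (j : ℝ) / n := by positivity
    have h2pi : 0 < √(2 * Real.pi) := by positivity
    have hsn : √(n : ℝ) ^ 2 = n := Real.sq_sqrt hn0.le
    have hsn0 : 0 < √(n : ℝ) := Real.sqrt_pos.mpr hn0
    have hsj0 : 0 < √(j : ℝ) := Real.sqrt_pos.mpr hj0
    rw [Real.rpow_add hp, Real.rpow_natCast, ← Real.sqrt_eq_rpow, Real.sqrt_div' _ hn0.le,
      Real.sqrt_div' _ hn0.le]
    have hden : √(2 * Real.pi) / √(n : ℝ) * (((j : ℝ) / n) ^ j * (√(j : ℝ) / √(n : ℝ))) *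
        Real.exp (-(j : ℝ)) * ((√(2 * Real.pi))⁻¹ * B) =
        (((j : ℝ) / n) ^ j * Real.exp (-(j : ℝ)) * (√(j : ℝ) / n)) * B := by
      generalize ((j : ℝ) / n) ^ j = P
      rw [show √(j : ℝ) / n = √(j : ℝ) / √(n : ℝ) ^ 2 by rw [hsn]]
      generalize √(n : ℝ) = q at *
      field_simp
    rw [hden]
    exact mul_div_mul_left _ _ (by positivity)
  rw [hratio, div_sub_one hB0.ne', abs_div, abs_of_pos hB0, div_le_iff₀ hB0]
  nlinarith
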